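/- Let s ≥ 1 and k ∈ ℤ^s_{≥1}. Then the f-polynomial of the ladder diagram Γ_k satisfies the recursion F_k(t) = Σ_{w ∈ W_{s−1}} t^{|w|} · F_{r_w(k)*w̃}(t). (By extracting coefficients, this recursion is the coefficient-wise form of the partial differential equation (D_s Ψ_{2s−1}(x*y;t))|_{y=0} = 0 satisfied by the exponential generating function Ψ of the f-polynomials, where D_s = ∂^s/∂x_1⋯∂x_s − Π_{i=1}^{s−1}(∂/∂x_i + ∂/∂x_{i+1} + t·∂/∂y_i).) -/

import Mathlib

open Classical

noncomputable section

/-- Partial sums of the (0-indexed) sequence `k`: `nseq k i = k 0 + ⋯ + k (i-1)`;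
so `nseq k i` is the paper's `n_i` for the sequence `(k_1, …, k_s) = (k 0, …, k (s-1))`. -/
def nseq (k : ℕ → ℕ) (i : ℕ) : ℕ := ∑ j ∈ Finset.range i, k j

/-- The set of terminal vertices `T_k = {(n_i, n - n_i) : 0 ≤ i ≤ s}` of the ladder diagram. -/
def terminals (s : ℕ) (k : ℕ → ℕ) : Set (ℕ × ℕ) :=
  {v | ∃ i ≤ s, v = (nseq k i, nseq k s - nseq k i)}

/-- The vertex set of the ladder diagram `Γ_k`. -/
def ladderV (s : ℕ) (k : ℕ → ℕ) : Set (ℕ × ℕ) :=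
  {v | ∃ t ∈ terminals s k, v.1 ≤ t.1 ∧ v.2 ≤ t.2}

/-- A unit grid step: one step to the right or one step up. -/
def gridStep (v w : ℕ × ℕ) : Prop :=
  w = (v.1 + 1, v.2) ∨ w = (v.1, v.2 + 1)

/-- The edge set of the ladder diagram `Γ_k`. -/
def ladderE (s : ℕ) (k : ℕ → ℕ) : Set ((ℕ × ℕ) × (ℕ × ℕ)) :=
  {e | e.1 ∈ ladderV s k ∧ e.2 ∈ ladderV s k ∧ gridStep e.1 e.2}

/-- A combinatorial (directed) graph in the grid `ℤ_{≥0} × ℤ_{≥0}`,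
given by a set of vertices and a set of edges. -/
@[ext] structure LGraph where
  V : Set (ℕ × ℕ)
  E : Set ((ℕ × ℕ) × (ℕ × ℕ))

/-- Subgraph inclusion order on grid graphs. -/
instance : PartialOrder LGraph where
  le γ γ' := γ.V ⊆ γ'.V ∧ γ.E ⊆ γ'.E
  le_refl γ := ⟨subset_rfl, subset_rfl⟩
  le_trans a b c h h' := ⟨h.1.trans h'.1, h.2.trans h'.2⟩
  le_antisymm a b h h' := LGraph.ext (subset_antisymm h.1 h'.1) (subset_antisymm h.2 h'.2)

/-- The ladder diagram `Γ_k` as a grid graph. -/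
def ladder (s : ℕ) (k : ℕ → ℕ) : LGraph :=
  ⟨ladderV s k, ladderE s k⟩

/-- A positive path: (the graph of) a shortest path in the ladder diagram `Γ_k`
from the origin `(0,0)` to a terminal vertex. -/
def IsPositivePath (s : ℕ) (k : ℕ → ℕ) (p : LGraph) : Prop :=
  ∃ (m : ℕ) (f : ℕ → ℕ × ℕ),
    f 0 = (0, 0) ∧ f m ∈ terminals s k ∧
    (∀ i < m, gridStep (f i) (f (i + 1))) ∧
    (∀ i ≤ m, f i ∈ ladderV s k) ∧
    p.V = {v | ∃ i ≤ m, v = f i} ∧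
    p.E = {e | ∃ i < m, e = (f i, f (i + 1))}

/-- A face of the ladder diagram `Γ_k`: a subgraph which contains all terminal
vertices and is a union of positive paths. -/
def IsLadderFace (s : ℕ) (k : ℕ → ℕ) (γ : LGraph) : Prop :=
  terminals s k ⊆ γ.V ∧
  ∃ P : Set LGraph, (∀ p ∈ P, IsPositivePath s k p) ∧
    γ.V = ⋃ p ∈ P, LGraph.V p ∧ γ.E = ⋃ p ∈ P, LGraph.E p

/-- The dimension (first Betti number) of a face of a ladder diagram:
`|E(γ)| - |V(γ)| + 1`. -/
def ldim (γ : LGraph) : ℤ :=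
  (γ.E.ncard : ℤ) - (γ.V.ncard : ℤ) + 1

/-- The index set `I = {(i,j) : i,j ≥ 1, i+j ≤ n}` of the coordinates of a
Gelfand–Cetlin pattern. -/
def GCIdx (n : ℕ) : Set (ℕ × ℕ) := {p | 1 ≤ p.1 ∧ 1 ≤ p.2 ∧ p.1 + p.2 ≤ n}

/-- The entries of a Gelfand–Cetlin pattern `x`, extended by the boundary
condition `x_{i, n+1-i} = λ_i`. -/
def gcEntry (n : ℕ) (lam : ℕ → ℝ) (x : GCIdx n → ℝ) (p : ℕ × ℕ) : ℝ :=
  if h : p ∈ GCIdx n then x ⟨p, h⟩ else lam p.1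

/-- The Gelfand–Cetlin polytope `P_λ`: the set of points `(x_{i,j})_{(i,j) ∈ I}`
with `x_{i,j+1} ≥ x_{i,j} ≥ x_{i+1,j}` for all `(i,j) ∈ I`, where
`x_{i,n+1-i} = λ_i`. -/
def GCPoly (n : ℕ) (lam : ℕ → ℝ) : Set (GCIdx n → ℝ) :=
  {x | ∀ i j : ℕ, (i, j) ∈ GCIdx n →
    gcEntry n lam x (i, j) ≤ gcEntry n lam x (i, j + 1) ∧
    gcEntry n lam x (i + 1, j) ≤ gcEntry n lam x (i, j)}

/-- The subset of `P_λ` obtained by turning the inequalities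
`x_{i,j+1} ≥ x_{i,j}` for `(i,j) ∈ SH` and `x_{i,j} ≥ x_{i+1,j}` for
`(i,j) ∈ SV` into equalities. -/
def GCFaceOf (n : ℕ) (lam : ℕ → ℝ) (SH SV : Set (ℕ × ℕ)) : Set (GCIdx n → ℝ) :=
  {x | x ∈ GCPoly n lam ∧
    (∀ p ∈ SH, gcEntry n lam x (p.1, p.2 + 1) = gcEntry n lam x p) ∧
    (∀ p ∈ SV, gcEntry n lam x p = gcEntry n lam x (p.1 + 1, p.2))}

/-- A face of the GC polytope: a nonempty solution set of the system obtained
by replacing some of the defining inequalities by equalities. -/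
def IsGCFace (n : ℕ) (lam : ℕ → ℝ) (F : Set (GCIdx n → ℝ)) : Prop :=
  F.Nonempty ∧ ∃ SH SV : Set (ℕ × ℕ), SH ⊆ GCIdx n ∧ SV ⊆ GCIdx n ∧
    F = GCFaceOf n lam SH SV

/-- The dimension of (a face of) the GC polytope: the dimension of its affine span. -/
def GCdim (n : ℕ) (F : Set (GCIdx n → ℝ)) : ℕ :=
  Module.finrank ℝ (affineSpan ℝ F).direction

/-- `lam` (1-indexed) is weakly decreasing with block structure `k`: it is
constant on each block `(n_{i-1}, n_i]` and strictly decreases between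
consecutive blocks. -/
def HasBlockStructure (s : ℕ) (k : ℕ → ℕ) (lam : ℕ → ℝ) : Prop :=
  (∀ i < s, ∀ a b : ℕ, nseq k i < a → a ≤ b → b ≤ nseq k (i + 1) → lam a = lam b) ∧
  (∀ i : ℕ, 1 ≤ i → i < s → lam (nseq k i + 1) < lam (nseq k i))

/-- The edge set of the graph `φ(F)` associated to a subset `F` of the GC polytope. -/
def phiE (n : ℕ) (lam : ℕ → ℝ) (F : Set (GCIdx n → ℝ)) :
    Set ((ℕ × ℕ) × (ℕ × ℕ)) :=
  {e | (∃ i < n, e = ((0, i), (0, i + 1)) ∨ e = ((i, 0), (i + 1, 0))) ∨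
    (∃ i j : ℕ, (i, j) ∈ GCIdx n ∧ e = ((i - 1, j), (i, j)) ∧
      ∃ x ∈ F, gcEntry n lam x (i, j) < gcEntry n lam x (i, j + 1)) ∨
    (∃ i j : ℕ, (i, j) ∈ GCIdx n ∧ e = ((i, j - 1), (i, j)) ∧
      ∃ x ∈ F, gcEntry n lam x (i + 1, j) < gcEntry n lam x (i, j))}

/-- The graph `φ(F)`: its edges are given by `phiE` and its vertices are the
endpoints of its edges. -/
def phiGC (n : ℕ) (lam : ℕ → ℝ) (F : Set (GCIdx n → ℝ)) : LGraph where
  V := {v | ∃ e ∈ phiE n lam F, v = e.1 ∨ v = e.2}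
  E := phiE n lam F

/-- The map `ψ`: for a subgraph `γ`, the set of points of `P_λ` where the
inequalities corresponding to the missing edges of `γ` become equalities. -/
def psiGC (n : ℕ) (lam : ℕ → ℝ) (γ : LGraph) : Set (GCIdx n → ℝ) :=
  {x | x ∈ GCPoly n lam ∧ ∀ i j : ℕ, (i, j) ∈ GCIdx n →
    (((i - 1, j), (i, j)) ∉ γ.E → gcEntry n lam x (i, j) = gcEntry n lam x (i, j + 1)) ∧
    (((i, j - 1), (i, j)) ∉ γ.E → gcEntry n lam x (i, j) = gcEntry n lam x (i + 1, j))}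
/-- The recursively defined point `x̄` of the proof of Lemma 2.6 (bijectivity):
`x̄_{i,j} = λ_i` if `i + j = n + 1`, and for `i + j ≤ n` it is determined from
`x̄_{i,j+1}` and `x̄_{i+1,j}` according to which of the two edges
`((i-1,j),(i,j))`, `((i,j-1),(i,j))` belong to `E`. -/
def barX (n : ℕ) (lam : ℕ → ℝ) (E : Set ((ℕ × ℕ) × (ℕ × ℕ))) : ℕ → ℕ → ℝ
  | i, j =>
    if h1 : n + 1 ≤ i + j then lam i
    else if h2 : ((i - 1, j), (i, j)) ∈ E then
      if h3 : ((i, j - 1), (i, j)) ∈ E then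
        (barX n lam E i (j + 1) + barX n lam E (i + 1) j) / 2
      else barX n lam E (i + 1) j
    else barX n lam E i (j + 1)
  termination_by i j => n + 1 - (i + j)
  decreasing_by all_goals omega

/-- `α, β : ℕ → ℕ` encode an element
`w = ((α_1,β_1),…,(α_{s-1},β_{s-1})) ∈ W_{s-1}`, with the conventions
`α_0 = 0`, `β_0 = 1`, `α_s = 1`, `β_s = 0`. -/
def IsW (s : ℕ) (α β : ℕ → ℕ) : Prop :=
  (∀ i : ℕ, 1 ≤ i → i < s →
    (α i, β i) = (1, 0) ∨ (α i, β i) = (0, 1) ∨ (α i, β i) = (1, 1)) ∧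
  α 0 = 0 ∧ β 0 = 1 ∧ α s = 1 ∧ β s = 0

/-- The edge set of the subgraph `g_w` of `Γ_k`: the horizontal edge into the
terminal vertex `v_i` when `α_i = 1` and the vertical edge into `v_i` when
`β_i = 1`. -/
def gwE (s : ℕ) (k α β : ℕ → ℕ) : Set ((ℕ × ℕ) × (ℕ × ℕ)) :=
  {e | ∃ i ≤ s,
    (α i = 1 ∧
      e = ((nseq k i - 1, nseq k s - nseq k i), (nseq k i, nseq k s - nseq k i))) ∨
    (β i = 1 ∧
      e = ((nseq k i, nseq k s - nseq k i - 1), (nseq k i, nseq k s - nseq k i)))}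

/-- The subgraph `g_w` of `Γ_k`. -/
def gwGraph (s : ℕ) (k α β : ℕ → ℕ) : LGraph where
  V := {v | ∃ e ∈ gwE s k α β, v = e.1 ∨ v = e.2}
  E := gwE s k α β

/-- The interleaved sequence `r_w(k) * w̃` of length `2s - 1` (0-indexed):
entry `2j` is `k''_{j+1} = k_{j+1} + 1 - α_{j+1} - β_j` and entry `2j + 1` is
`w̃_{j+1} = α_{j+1} β_{j+1}`. -/
def rstar (s : ℕ) (k α β : ℕ → ℕ) (t : ℕ) : ℕ :=
  if t % 2 = 0 then k (t / 2) + 1 - α (t / 2 + 1) - β (t / 2)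
  else α (t / 2 + 1) * β (t / 2 + 1)

/-- `α`-value of one of the three symbols `(1,0), (0,1), (1,1)`,
encoded as `0, 1, 2 : Fin 3` respectively. -/
def aW3 (c : Fin 3) : ℕ := if c = 1 then 0 else 1

/-- `β`-value of one of the three symbols `(1,0), (0,1), (1,1)`,
encoded as `0, 1, 2 : Fin 3` respectively. -/
def bW3 (c : Fin 3) : ℕ := if c = 0 then 0 else 1

/-- The function `α` of the element of `W_{s-1}` encoded by
`c : Fin (s-1) → Fin 3` (with the conventions `α_0 = 0`, `α_s = 1`). -/
def alph (s : ℕ) (c : Fin (s - 1) → Fin 3) (i : ℕ) : ℕ :=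
  if i = 0 then 0 else if h : i - 1 < s - 1 then aW3 (c ⟨i - 1, h⟩) else 1

/-- The function `β` of the element of `W_{s-1}` encoded by
`c : Fin (s-1) → Fin 3` (with the conventions `β_0 = 1`, `β_s = 0`). -/
def bet (s : ℕ) (c : Fin (s - 1) → Fin 3) (i : ℕ) : ℕ :=
  if i = 0 then 1 else if h : i - 1 < s - 1 then bW3 (c ⟨i - 1, h⟩) else 0

/-- The interleaved sequence `r_w(k) * w̃` (of length `2s - 1`, 0-indexed) for
the element `w ∈ W_{s-1}` encoded by `c`. -/
def newk (s : ℕ) (c : Fin (s - 1) → Fin 3) (k : ℕ → ℕ) (t : ℕ) : ℕ :=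
  if t % 2 = 0 then k (t / 2) + 1 - alph s c (t / 2 + 1) - bet s c (t / 2)
  else alph s c (t / 2 + 1) * bet s c (t / 2 + 1)

/-- `|w| = Σ_{i=1}^{s-1} α_i β_i` for the element `w ∈ W_{s-1}` encoded by `c`. -/
def wsize (s : ℕ) (c : Fin (s - 1) → Fin 3) : ℕ :=
  ∑ j ∈ Finset.range (s - 1), alph s c (j + 1) * bet s c (j + 1)

/-- The subgraph `g_w` of `Γ_k` for the element `w ∈ W_{s-1}` encoded by `c`. -/
def gwGraph3 (s : ℕ) (k : ℕ → ℕ) (c : Fin (s - 1) → Fin 3) : LGraph :=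
  gwGraph s k (alph s c) (bet s c)

/-- Union of two grid graphs (union of vertex sets and of edge sets). -/
def ugraph (γ δ : LGraph) : LGraph := ⟨γ.V ∪ δ.V, γ.E ∪ δ.E⟩

/-- The generating function `F_k(t) = Σ_{γ face of Γ_k} t^{dim γ}` of the
`f`-vector of the ladder diagram `Γ_k`, as a formal power series in `t`:
the coefficient of `t^d` is the number of faces of `Γ_k` of dimension `d`. -/
def fpol (s : ℕ) (k : ℕ → ℕ) : PowerSeries ℤ :=
  PowerSeries.mk fun d =>
    (Set.ncard {γ : LGraph | IsLadderFace s k γ ∧ ldim γ = (d : ℤ)} : ℤ)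

/-- The operator `Π_{i=1}^{s-1} (∂/∂x_i + ∂/∂x_{i+1} + t ∂/∂y_i)` applied to a
polynomial in the variables `x_1, x_2, … , y_1, y_2, …` (the variable `x_{i+1}`
is `Sum.inl i` and `y_{i+1}` is `Sum.inr i`) over `ℚ[t]`. -/
def Lfold (s : ℕ) (f : MvPolynomial (ℕ ⊕ ℕ) (Polynomial ℚ)) :
    MvPolynomial (ℕ ⊕ ℕ) (Polynomial ℚ) :=
  (List.range (s - 1)).foldl
    (fun g i =>
      MvPolynomial.pderiv (Sum.inl i) g + MvPolynomial.pderiv (Sum.inl (i + 1)) g +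
        (Polynomial.X : Polynomial ℚ) • MvPolynomial.pderiv (Sum.inr i) g) f

/-- The operator `D_w = Π_{i=1}^{s-1} (∂/∂x_i)^{1-α_i} (∂/∂x_{i+1})^{1-β_i}
(t ∂/∂y_i)^{α_i β_i}` for the element `w ∈ W_{s-1}` encoded by
`c : Fin (s-1) → Fin 3` (`0 ↦ (1,0)`, `1 ↦ (0,1)`, `2 ↦ (1,1)`). -/
def DfoldC (s : ℕ) (c : Fin (s - 1) → Fin 3)
    (f : MvPolynomial (ℕ ⊕ ℕ) (Polynomial ℚ)) : MvPolynomial (ℕ ⊕ ℕ) (Polynomial ℚ) :=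
  (List.finRange (s - 1)).foldl
    (fun g i =>
      if c i = 0 then MvPolynomial.pderiv (Sum.inl ((i : ℕ) + 1)) g
      else if c i = 1 then MvPolynomial.pderiv (Sum.inl (i : ℕ)) g
      else (Polynomial.X : Polynomial ℚ) • MvPolynomial.pderiv (Sum.inr (i : ℕ)) g) f

/-- The operator `D_w` for the element `w ∈ W_{s-1}` encoded by `α, β : ℕ → ℕ`. -/
def DfoldW (s : ℕ) (α β : ℕ → ℕ)
    (f : MvPolynomial (ℕ ⊕ ℕ) (Polynomial ℚ)) : MvPolynomial (ℕ ⊕ ℕ) (Polynomial ℚ) :=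
  (List.range (s - 1)).foldl
    (fun g j =>
      if α (j + 1) = 1 ∧ β (j + 1) = 1 then
        (Polynomial.X : Polynomial ℚ) • MvPolynomial.pderiv (Sum.inr j) g
      else if α (j + 1) = 1 then MvPolynomial.pderiv (Sum.inl (j + 1)) g
      else MvPolynomial.pderiv (Sum.inl j) g) f

/-- Substitution of `0` for all the variables `y_j = Sum.inr j`. -/
def setYzero :
    MvPolynomial (ℕ ⊕ ℕ) (Polynomial ℚ) →ₐ[Polynomial ℚ] MvPolynomial (ℕ ⊕ ℕ) (Polynomial ℚ) :=
  MvPolynomial.aeval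
    (Sum.elim (fun i => MvPolynomial.X (Sum.inl i)) fun _ => (0 : MvPolynomial (ℕ ⊕ ℕ) (Polynomial ℚ)))
end

/-!
A grid graph is a union of directed paths of length `n` starting at the origin exactly when its
edges are grid steps, each vertex other than the origin has an incoming edge, and each vertex below
the antidiagonal `x + y = n` has an outgoing one. A face of `Γ_k` is such a graph whose vertices on
that antidiagonal are the terminal ones.

Removing the vertices on the last antidiagonal from a face removes a set `G` of edges containing at
least one of the two edges into each terminal vertex, so `G` is the edge set of `g_w` for a unique
word `w`. What is left is a union of paths of length `n - 1` ending in the sources of `G`. These are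
the terminal vertices of `Γ_{r_w(k) * w̃}`, so what is left is an arbitrary face of that diagram, of
dimension lower by `|G| - (s + 1) = |w|`.
-/

/-- The index of the antidiagonal on which a grid point lies, i.e. its distance from the origin. -/
def level (v : ℕ × ℕ) : ℕ := v.1 + v.2

theorem gridStep.level_eq {v w : ℕ × ℕ} (h : gridStep v w) : level w = level v + 1 := by
  rcases h with rfl | rfl <;> simp only [level] <;> omega

theorem level_eq_zero {v : ℕ × ℕ} : level v = 0 ↔ v = (0, 0) := by
  simp [level, Prod.ext_iff]

theorem finite_setOf_level_le (n : ℕ) : {v | level v ≤ n}.Finite :=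
  (Set.finite_Iic (n, n)).subset fun _ hv =>
    ⟨le_self_add.trans hv, le_add_self.trans hv⟩

theorem finite_of_gridStep_of_level_eq {n : ℕ} {G : Set ((ℕ × ℕ) × (ℕ × ℕ))}
    (hstep : ∀ e ∈ G, gridStep e.1 e.2) (hlevel : ∀ e ∈ G, level e.2 = n) : G.Finite :=
  ((finite_setOf_level_le n).prod (finite_setOf_level_le n)).subset fun e he => by
    have := (hstep e he).level_eq
    have := hlevel e he
    exact ⟨show level e.1 ≤ n by omega, show level e.2 ≤ n by omega⟩

theorem level_apply_of_gridStep {n : ℕ} {f : ℕ → ℕ × ℕ} (h₀ : f 0 = (0, 0))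
    (hf : ∀ i < n, gridStep (f i) (f (i + 1))) {i : ℕ} (hi : i ≤ n) : level (f i) = i := by
  induction i with
  | zero => exact level_eq_zero.2 h₀
  | succ i ih => rw [(hf i hi).level_eq, ih (Nat.le_of_succ_le hi)]

theorem le_of_gridStep {n : ℕ} {f : ℕ → ℕ × ℕ}
    (hf : ∀ i < n, gridStep (f i) (f (i + 1))) {i : ℕ} (hi : i ≤ n) : f i ≤ f n := by
  induction n, hi using Nat.le_induction with
  | base => exact le_rfl
  | succ n _ ih =>
    refine (ih fun i hi => hf i (Nat.lt_succ_of_lt hi)).trans ?_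
    rcases hf n n.lt_succ_self with h | h <;> rw [h] <;> simp [Prod.le_def]

namespace LGraph

/-- The graph traced by the first `n` steps of the sequence `f`. -/
def pathGraph (f : ℕ → ℕ × ℕ) (n : ℕ) : LGraph :=
  ⟨{v | ∃ i ≤ n, v = f i}, {e | ∃ i < n, e = (f i, f (i + 1))}⟩

/-- `γ.IsPathUnion n` says that `γ` is a union of directed paths of length `n` starting at the
origin. It is encoded by conditions on the edges at each vertex, which are easier to verify for
modifications of `γ` than the existence of the paths. -/
structure IsPathUnion (γ : LGraph) (n : ℕ) : Prop where
  gridStep_of_mem : ∀ e ∈ γ.E, gridStep e.1 e.2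
  fst_mem : ∀ e ∈ γ.E, e.1 ∈ γ.V
  snd_mem : ∀ e ∈ γ.E, e.2 ∈ γ.V
  eq_zero_or_exists_snd_eq : ∀ v ∈ γ.V, v = (0, 0) ∨ ∃ e ∈ γ.E, e.2 = v
  level_eq_or_exists_fst_eq : ∀ v ∈ γ.V, level v = n ∨ ∃ e ∈ γ.E, e.1 = v
  level_le : ∀ v ∈ γ.V, level v ≤ n

/-- The vertices of `γ` on the antidiagonal `x + y = n`. -/
def vertexLayer (γ : LGraph) (n : ℕ) : Set (ℕ × ℕ) := {v ∈ γ.V | level v = n}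

/-- The edges of `γ` that end on the antidiagonal `x + y = n`. -/
def edgeLayer (γ : LGraph) (n : ℕ) : Set ((ℕ × ℕ) × (ℕ × ℕ)) := {e ∈ γ.E | level e.2 = n}

/-- The part of `γ` on or below the antidiagonal `x + y = n`. -/
def truncate (γ : LGraph) (n : ℕ) : LGraph :=
  ⟨{v ∈ γ.V | level v ≤ n}, {e ∈ γ.E | level e.2 ≤ n}⟩

/-- The graph obtained from `γ` by adding the edges in `G` together with their targets; it is used
for edges whose sources already belong to `γ`. -/
def attach (γ : LGraph) (G : Set ((ℕ × ℕ) × (ℕ × ℕ))) : LGraph :=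
  ⟨γ.V ∪ Prod.snd '' G, γ.E ∪ G⟩

variable {γ : LGraph} {n : ℕ}

theorem isPathUnion_pathGraph {f : ℕ → ℕ × ℕ} (h₀ : f 0 = (0, 0))
    (hf : ∀ i < n, gridStep (f i) (f (i + 1))) : (pathGraph f n).IsPathUnion n where
  gridStep_of_mem := by
    rintro _ ⟨i, hi, rfl⟩
    exact hf i hi
  fst_mem := by
    rintro _ ⟨i, hi, rfl⟩
    exact ⟨i, hi.le, rfl⟩
  snd_mem := by
    rintro _ ⟨i, hi, rfl⟩
    exact ⟨i + 1, hi, rfl⟩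
  eq_zero_or_exists_snd_eq := by
    rintro _ ⟨_ | i, hi, rfl⟩
    · exact Or.inl h₀
    · exact Or.inr ⟨_, ⟨i, hi, rfl⟩, rfl⟩
  level_eq_or_exists_fst_eq := by
    rintro _ ⟨i, hi, rfl⟩
    rcases hi.eq_or_lt with rfl | hi
    · exact Or.inl (level_apply_of_gridStep h₀ hf le_rfl)
    · exact Or.inr ⟨_, ⟨i, hi, rfl⟩, rfl⟩
  level_le := by
    rintro _ ⟨i, hi, rfl⟩
    exact (level_apply_of_gridStep h₀ hf hi).trans_le hi

theorem isPathUnion_biUnion {P : Set LGraph} (hP : ∀ p ∈ P, p.IsPathUnion n) :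
    (⟨⋃ p ∈ P, p.V, ⋃ p ∈ P, p.E⟩ : LGraph).IsPathUnion n where
  gridStep_of_mem e he := by
    obtain ⟨p, hp, he⟩ := Set.mem_iUnion₂.1 he
    exact (hP p hp).gridStep_of_mem e he
  fst_mem e he := by
    obtain ⟨p, hp, he⟩ := Set.mem_iUnion₂.1 he
    exact Set.mem_iUnion₂.2 ⟨p, hp, (hP p hp).fst_mem e he⟩
  snd_mem e he := by
    obtain ⟨p, hp, he⟩ := Set.mem_iUnion₂.1 he
    exact Set.mem_iUnion₂.2 ⟨p, hp, (hP p hp).snd_mem e he⟩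
  eq_zero_or_exists_snd_eq v hv := by
    obtain ⟨p, hp, hv⟩ := Set.mem_iUnion₂.1 hv
    exact ((hP p hp).eq_zero_or_exists_snd_eq v hv).imp_right fun ⟨e, he, h⟩ =>
      ⟨e, Set.mem_iUnion₂.2 ⟨p, hp, he⟩, h⟩
  level_eq_or_exists_fst_eq v hv := by
    obtain ⟨p, hp, hv⟩ := Set.mem_iUnion₂.1 hv
    exact ((hP p hp).level_eq_or_exists_fst_eq v hv).imp_right fun ⟨e, he, h⟩ =>
      ⟨e, Set.mem_iUnion₂.2 ⟨p, hp, he⟩, h⟩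
  level_le v hv := by
    obtain ⟨p, hp, hv⟩ := Set.mem_iUnion₂.1 hv
    exact (hP p hp).level_le v hv

namespace IsPathUnion

theorem exists_path_to (h : γ.IsPathUnion n) {v : ℕ × ℕ} (hv : v ∈ γ.V) :
    ∃ f : ℕ → ℕ × ℕ, f 0 = (0, 0) ∧ f (level v) = v ∧
      ∀ i < level v, (f i, f (i + 1)) ∈ γ.E := by
  induction hm : level v generalizing v with
  | zero => exact ⟨fun _ => v, level_eq_zero.1 hm, rfl, by simp⟩
  | succ m ih =>
    have hv₀ : v ≠ (0, 0) := mt level_eq_zero.2 (hm ▸ m.succ_ne_zero)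
    obtain ⟨e, he, rfl⟩ := (h.eq_zero_or_exists_snd_eq v hv).resolve_left hv₀
    have hlevel := (h.gridStep_of_mem e he).level_eq
    obtain ⟨f, h₀, hfm, hf⟩ := ih (h.fst_mem e he) (by omega)
    refine ⟨Function.update f (m + 1) e.2, by simp [h₀], by simp, fun i hi => ?_⟩
    rcases Nat.lt_succ_iff_lt_or_eq.1 hi with hi | rfl
    · simpa [Function.update_of_ne, hi.ne, (Nat.lt_succ_of_lt hi).ne] using hf i hi
    · simpa [hfm] using he

theorem exists_path_from (h : γ.IsPathUnion n) {v : ℕ × ℕ} (hv : v ∈ γ.V) :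
    ∃ f : ℕ → ℕ × ℕ, f (level v) = v ∧
      ∀ i, level v ≤ i → i < n → (f i, f (i + 1)) ∈ γ.E := by
  induction hm : n - level v generalizing v with
  | zero => exact ⟨fun _ => v, rfl, by omega⟩
  | succ m ih =>
    obtain ⟨e, he, rfl⟩ := (h.level_eq_or_exists_fst_eq v hv).resolve_left (by omega)
    have hlevel := (h.gridStep_of_mem e he).level_eq
    obtain ⟨f, hf₂, hf⟩ := ih (h.snd_mem e he) (by omega)
    rw [hlevel] at hf₂ hf
    refine ⟨Function.update f (level e.1) e.1, by simp, fun i hi hin => ?_⟩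
    rcases hi.eq_or_lt with rfl | hi
    · simpa [hf₂] using he
    · simpa [hi.ne', (Nat.lt_succ_of_lt hi).ne'] using hf i (by omega) hin

theorem pathGraph_le (h : γ.IsPathUnion n) {f : ℕ → ℕ × ℕ} (hn : f n ∈ γ.V)
    (hf : ∀ i < n, (f i, f (i + 1)) ∈ γ.E) : pathGraph f n ≤ γ := by
  constructor
  · rintro _ ⟨i, hi, rfl⟩
    rcases hi.eq_or_lt with rfl | hi
    · exact hn
    · exact h.fst_mem _ (hf i hi)
  · rintro _ ⟨i, hi, rfl⟩
    exact hf i hi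

theorem exists_pathGraph_le_edge_mem (h : γ.IsPathUnion n) {e : (ℕ × ℕ) × (ℕ × ℕ)}
    (he : e ∈ γ.E) : ∃ f, f 0 = (0, 0) ∧ pathGraph f n ≤ γ ∧ e ∈ (pathGraph f n).E := by
  have hlevel := (h.gridStep_of_mem e he).level_eq
  have hle := h.level_le _ (h.snd_mem e he)
  obtain ⟨f, hf₀, hf₁, hf⟩ := h.exists_path_to (h.fst_mem e he)
  obtain ⟨g, hg₂, hg⟩ := h.exists_path_from (h.snd_mem e he)
  rw [hlevel] at hg₂ hg
  let p : ℕ → ℕ × ℕ := fun i => if i ≤ level e.1 then f i else g i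
  have hpe : (p (level e.1), p (level e.1 + 1)) = e := by simp [p, hf₁, hg₂]
  have hp : ∀ i < n, (p i, p (i + 1)) ∈ γ.E := fun i hi => by
    rcases lt_trichotomy i (level e.1) with hlt | rfl | hgt
    · simpa [p, hlt.le, Nat.succ_le_of_lt hlt] using hf i hlt
    · rwa [hpe]
    · simpa [p, hgt.not_ge, (Nat.lt_succ_of_lt hgt).not_ge] using hg i hgt hi
  have hpn : p n ∈ γ.V := by
    obtain ⟨m, rfl⟩ : ∃ m, n = m + 1 := ⟨n - 1, by omega⟩
    exact h.snd_mem _ (hp m m.lt_succ_self)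
  exact ⟨p, by simp [p, hf₀], h.pathGraph_le hpn hp, level e.1, by omega, hpe.symm⟩

theorem exists_pathGraph_le_vertex_mem (h : γ.IsPathUnion n) {v : ℕ × ℕ} (hv : v ∈ γ.V) :
    ∃ f, f 0 = (0, 0) ∧ pathGraph f n ≤ γ ∧ v ∈ (pathGraph f n).V := by
  rcases h.level_eq_or_exists_fst_eq v hv with rfl | ⟨e, he, rfl⟩
  · obtain ⟨f, hf₀, hfv, hf⟩ := h.exists_path_to hv
    exact ⟨f, hf₀, h.pathGraph_le (by rwa [hfv]) hf, _, le_rfl, hfv.symm⟩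
  · obtain ⟨f, hf₀, hle, i, hi, rfl⟩ := h.exists_pathGraph_le_edge_mem he
    exact ⟨f, hf₀, hle, i, hi.le, rfl⟩

theorem finite_vertices (h : γ.IsPathUnion n) : γ.V.Finite :=
  (finite_setOf_level_le n).subset h.level_le

theorem finite_edges (h : γ.IsPathUnion n) : γ.E.Finite :=
  (h.finite_vertices.prod h.finite_vertices).subset fun e he => ⟨h.fst_mem e he, h.snd_mem e he⟩

theorem ldim_nonneg (h : γ.IsPathUnion n) : 0 ≤ ldim γ := by
  have hV : γ.V ⊆ insert (0, 0) (Prod.snd '' γ.E) := h.eq_zero_or_exists_snd_eq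
  have hcard : γ.V.ncard ≤ γ.E.ncard + 1 :=
    calc γ.V.ncard ≤ (insert (0, 0) (Prod.snd '' γ.E)).ncard :=
          Set.ncard_le_ncard hV ((h.finite_edges.image _).insert _)
      _ ≤ (Prod.snd '' γ.E).ncard + 1 := Set.ncard_insert_le _ _
      _ ≤ γ.E.ncard + 1 := by gcongr; exact Set.ncard_image_le h.finite_edges
  unfold ldim
  omega

theorem snd_image_edgeLayer {m : ℕ} (h : γ.IsPathUnion m) (hn : n ≠ 0) :
    Prod.snd '' γ.edgeLayer n = γ.vertexLayer n := by
  ext v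
  constructor
  · rintro ⟨e, ⟨he, hl⟩, rfl⟩
    exact ⟨h.snd_mem e he, hl⟩
  · rintro ⟨hv, rfl⟩
    have hv₀ : v ≠ (0, 0) := mt level_eq_zero.2 hn
    obtain ⟨e, he, rfl⟩ := (h.eq_zero_or_exists_snd_eq v hv).resolve_left hv₀
    exact ⟨e, ⟨he, rfl⟩, rfl⟩

theorem vertexLayer_truncate (h : γ.IsPathUnion (n + 1)) :
    (γ.truncate n).vertexLayer n = Prod.fst '' γ.edgeLayer (n + 1) := by
  ext v
  constructor
  · rintro ⟨⟨hv, -⟩, rfl⟩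
    obtain ⟨e, he, rfl⟩ := (h.level_eq_or_exists_fst_eq v hv).resolve_left (by omega)
    exact ⟨e, ⟨he, (h.gridStep_of_mem e he).level_eq⟩, rfl⟩
  · rintro ⟨e, ⟨he, hl⟩, rfl⟩
    have hlevel : level e.1 = n := by have := (h.gridStep_of_mem e he).level_eq; omega
    exact ⟨⟨h.fst_mem e he, hlevel.le⟩, hlevel⟩

theorem truncate {m : ℕ} (h : γ.IsPathUnion m) (hnm : n ≤ m) :
    (γ.truncate n).IsPathUnion n where
  gridStep_of_mem e he := h.gridStep_of_mem e he.1
  fst_mem e he := ⟨h.fst_mem e he.1, by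
    have := (h.gridStep_of_mem e he.1).level_eq; have := he.2; omega⟩
  snd_mem e he := ⟨h.snd_mem e he.1, he.2⟩
  eq_zero_or_exists_snd_eq := by
    rintro v ⟨hv, hl⟩
    refine (h.eq_zero_or_exists_snd_eq v hv).imp_right ?_
    rintro ⟨e, he, rfl⟩
    exact ⟨e, ⟨he, hl⟩, rfl⟩
  level_eq_or_exists_fst_eq := by
    rintro v ⟨hv, hl⟩
    refine or_iff_not_imp_left.2 fun hne => ?_
    obtain ⟨e, he, rfl⟩ := (h.level_eq_or_exists_fst_eq v hv).resolve_left (by omega)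
    have := (h.gridStep_of_mem e he).level_eq
    exact ⟨e, ⟨he, by omega⟩, rfl⟩
  level_le v hv := hv.2

theorem attach_edgeLayer_truncate (h : γ.IsPathUnion (n + 1)) :
    (γ.truncate n).attach (γ.edgeLayer (n + 1)) = γ := by
  ext x
  · rw [LGraph.attach, h.snd_image_edgeLayer n.succ_ne_zero]
    constructor
    · rintro (hx | hx) <;> exact hx.1
    · intro hx
      exact (Nat.le_succ_iff.1 (h.level_le x hx)).imp (⟨hx, ·⟩) (⟨hx, ·⟩)
  · constructor
    · rintro (hx | hx) <;> exact hx.1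
    · intro hx
      exact (Nat.le_succ_iff.1 (h.level_le _ (h.snd_mem x hx))).imp (⟨hx, ·⟩) (⟨hx, ·⟩)

section attach

variable {G : Set ((ℕ × ℕ) × (ℕ × ℕ))}

theorem truncate_attach (h : γ.IsPathUnion n) (hG : ∀ e ∈ G, level e.2 = n + 1) :
    (γ.attach G).truncate n = γ := by
  ext x
  · constructor
    · rintro ⟨hx | ⟨e, he, rfl⟩, hl⟩
      · exact hx
      · have := hG e he
        omega
    · exact fun hx => ⟨Or.inl hx, h.level_le x hx⟩
  · constructor
    · rintro ⟨hx | hx, hl⟩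
      · exact hx
      · have := hG x hx
        omega
    · exact fun hx => ⟨Or.inl hx, h.level_le _ (h.snd_mem x hx)⟩

theorem edgeLayer_attach (h : γ.IsPathUnion n) (hG : ∀ e ∈ G, level e.2 = n + 1) :
    (γ.attach G).edgeLayer (n + 1) = G := by
  ext e
  constructor
  · rintro ⟨he | he, hl⟩
    · have := h.level_le _ (h.snd_mem e he)
      omega
    · exact he
  · exact fun he => ⟨Or.inr he, hG e he⟩

theorem attach (h : γ.IsPathUnion n) (hstep : ∀ e ∈ G, gridStep e.1 e.2)
    (hG : γ.vertexLayer n = Prod.fst '' G) : (γ.attach G).IsPathUnion (n + 1) := by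
  have hfst : ∀ e ∈ G, e.1 ∈ γ.vertexLayer n := fun e he => hG ▸ ⟨e, he, rfl⟩
  have hsnd : ∀ e ∈ G, level e.2 = n + 1 := fun e he => by
    rw [(hstep e he).level_eq, (hfst e he).2]
  constructor
  · rintro e (he | he)
    exacts [h.gridStep_of_mem e he, hstep e he]
  · rintro e (he | he)
    exacts [Or.inl (h.fst_mem e he), Or.inl (hfst e he).1]
  · rintro e (he | he)
    exacts [Or.inl (h.snd_mem e he), Or.inr ⟨e, he, rfl⟩]
  · rintro v (hv | ⟨e, he, rfl⟩)
    · exact (h.eq_zero_or_exists_snd_eq v hv).imp_right fun ⟨e, he, hev⟩ => ⟨e, Or.inl he, hev⟩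
    · exact Or.inr ⟨e, Or.inr he, rfl⟩
  · rintro v (hv | ⟨e, he, rfl⟩)
    · refine Or.inr ?_
      rcases h.level_eq_or_exists_fst_eq v hv with hl | ⟨e, he, hev⟩
      · obtain ⟨e, he, hev⟩ : v ∈ Prod.fst '' G := hG ▸ ⟨hv, hl⟩
        exact ⟨e, Or.inr he, hev⟩
      · exact ⟨e, Or.inl he, hev⟩
    · exact Or.inl (hsnd e he)
  · rintro v (hv | ⟨e, he, rfl⟩)
    exacts [(h.level_le v hv).trans n.le_succ, (hsnd e he).le]

theorem ldim_attach (h : γ.IsPathUnion n) (hGfin : G.Finite)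
    (hG : ∀ e ∈ G, level e.2 = n + 1) :
    ldim (γ.attach G) = ldim γ + (G.ncard - (Prod.snd '' G).ncard) := by
  have hV : Disjoint γ.V (Prod.snd '' G) := Set.disjoint_left.2 fun v hv ⟨e, he, hev⟩ => by
    have := h.level_le v hv
    have := hG e he
    rw [hev] at this
    omega
  have hE : Disjoint γ.E G := Set.disjoint_left.2 fun e he heG => by
    have := h.level_le _ (h.snd_mem e he)
    have := hG e heG
    omega
  have hVcard := Set.ncard_union_eq hV h.finite_vertices (hGfin.image _)
  have hEcard := Set.ncard_union_eq hE h.finite_edges hGfin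
  simp only [ldim, LGraph.attach, hVcard, hEcard]
  push_cast
  ring

end attach

end IsPathUnion

theorem finite_setOf_isPathUnion (n : ℕ) : {γ : LGraph | γ.IsPathUnion n}.Finite := by
  have hVE := (finite_setOf_level_le n).finite_subsets.prod
    ((finite_setOf_level_le n).prod (finite_setOf_level_le n)).finite_subsets
  refine Set.Finite.of_finite_image (f := fun γ : LGraph => (γ.V, γ.E)) (hVE.subset ?_) ?_
  · rintro _ ⟨γ, h, rfl⟩
    exact ⟨h.level_le, fun e he =>
      ⟨h.level_le _ (h.fst_mem e he), h.level_le _ (h.snd_mem e he)⟩⟩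
  · rintro γ - γ' - heq
    exact LGraph.ext (congrArg Prod.fst heq) (congrArg Prod.snd heq)

theorem ncard_setOf_edgeLayer_eq {G : Set ((ℕ × ℕ) × (ℕ × ℕ))}
    (hstep : ∀ e ∈ G, gridStep e.1 e.2) (hlevel : ∀ e ∈ G, level e.2 = n + 1) (d : ℤ) :
    {γ : LGraph | γ.IsPathUnion (n + 1) ∧ γ.edgeLayer (n + 1) = G ∧ ldim γ = d}.ncard =
      {γ : LGraph | γ.IsPathUnion n ∧ γ.vertexLayer n = Prod.fst '' G ∧
        ldim γ = d - (G.ncard - (Prod.snd '' G).ncard)}.ncard := by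
  have hGfin : G.Finite := finite_of_gridStep_of_level_eq hstep hlevel
  refine (Set.InvOn.bijOn (f := (·.truncate n)) (f' := (·.attach G)) ⟨?_, ?_⟩ ?_ ?_).ncard_eq
  · rintro γ ⟨h, rfl, -⟩
    exact h.attach_edgeLayer_truncate
  · rintro γ ⟨h, -⟩
    exact h.truncate_attach hlevel
  · rintro γ ⟨h, rfl, rfl⟩
    have hdim := (h.truncate n.le_succ).ldim_attach hGfin hlevel
    rw [h.attach_edgeLayer_truncate] at hdim
    exact ⟨h.truncate n.le_succ, h.vertexLayer_truncate, by linarith⟩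
  · rintro γ ⟨h, hG, hd⟩
    refine ⟨h.attach hstep hG, h.edgeLayer_attach hlevel, ?_⟩
    linarith [h.ldim_attach hGfin hlevel]

end LGraph

theorem nseq_zero (k : ℕ → ℕ) : nseq k 0 = 0 :=
  Finset.sum_range_zero k

theorem nseq_succ (k : ℕ → ℕ) (i : ℕ) : nseq k (i + 1) = nseq k i + k i :=
  Finset.sum_range_succ k i

theorem monotone_nseq (k : ℕ → ℕ) : Monotone (nseq k) :=
  monotone_nat_of_le_succ fun i => by rw [nseq_succ]; exact le_self_add

theorem strictMonoOn_nseq {s : ℕ} {k : ℕ → ℕ} (hk : ∀ i < s, 0 < k i) :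
    StrictMonoOn (nseq k) (Set.Iic s) := fun i _ j hj hij =>
  calc nseq k i < nseq k i + k i := Nat.lt_add_of_pos_right (hk i (hij.trans_le hj))
    _ = nseq k (i + 1) := (nseq_succ k i).symm
    _ ≤ nseq k j := monotone_nseq k hij

theorem nseq_pos {s : ℕ} {k : ℕ → ℕ} (hs : 0 < s) (hk : ∀ i < s, 0 < k i) : 0 < nseq k s :=
  strictMonoOn_nseq hk hs.le Set.self_mem_Iic hs

/-- The terminal vertex `v_i = (n_i, n - n_i)` of the ladder diagram `Γ_k`. -/
def terminalVertex (s : ℕ) (k : ℕ → ℕ) (i : ℕ) : ℕ × ℕ := (nseq k i, nseq k s - nseq k i)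

theorem level_terminalVertex {s i : ℕ} (k : ℕ → ℕ) (hi : i ≤ s) :
    level (terminalVertex s k i) = nseq k s :=
  Nat.add_sub_of_le (monotone_nseq k hi)

theorem level_of_mem_terminals {s : ℕ} {k : ℕ → ℕ} {v : ℕ × ℕ} (hv : v ∈ terminals s k) :
    level v = nseq k s := by
  obtain ⟨i, hi, rfl⟩ := hv
  exact level_terminalVertex k hi

theorem injOn_terminalVertex {s : ℕ} {k : ℕ → ℕ} (hk : ∀ i < s, 0 < k i) :
    Set.InjOn (terminalVertex s k) (Set.Iic s) := fun _ hi _ hj h =>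
  (strictMonoOn_nseq hk).injOn hi hj (congrArg Prod.fst h)

theorem ncard_terminals {s : ℕ} {k : ℕ → ℕ} (hk : ∀ i < s, 0 < k i) :
    (terminals s k).ncard = s + 1 := by
  have himage : terminals s k = terminalVertex s k '' Set.Iic s :=
    Set.ext fun v => exists_congr fun i => and_congr_right fun _ => eq_comm
  rw [himage, (injOn_terminalVertex hk).ncard_image, Set.ncard_eq_toFinset_card', Set.toFinset_Iic,
    Nat.card_Iic]

theorem isPositivePath_iff {s : ℕ} {k : ℕ → ℕ} {p : LGraph} :
    IsPositivePath s k p ↔ ∃ f : ℕ → ℕ × ℕ, f 0 = (0, 0) ∧ f (nseq k s) ∈ terminals s k ∧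
      (∀ i < nseq k s, gridStep (f i) (f (i + 1))) ∧ p = LGraph.pathGraph f (nseq k s) := by
  constructor
  · rintro ⟨m, f, h₀, hm, hf, -, hV, hE⟩
    obtain rfl : m = nseq k s := by
      rw [← level_of_mem_terminals hm, level_apply_of_gridStep h₀ hf le_rfl]
    exact ⟨f, h₀, hm, hf, LGraph.ext hV hE⟩
  · rintro ⟨f, h₀, hn, hf, rfl⟩
    exact ⟨nseq k s, f, h₀, hn, hf, fun i hi => ⟨_, hn, le_of_gridStep hf hi⟩, rfl, rfl⟩

theorem isLadderFace_iff {s : ℕ} {k : ℕ → ℕ} {γ : LGraph} :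
    IsLadderFace s k γ ↔
      γ.IsPathUnion (nseq k s) ∧ γ.vertexLayer (nseq k s) = terminals s k := by
  constructor
  · rintro ⟨hT, P, hP, hV, hE⟩
    simp only [isPositivePath_iff] at hP
    refine ⟨?_, Set.Subset.antisymm ?_ fun v hv => ⟨hT hv, level_of_mem_terminals hv⟩⟩
    · rw [show γ = ⟨_, _⟩ from LGraph.ext hV hE]
      refine LGraph.isPathUnion_biUnion fun p hp => ?_
      obtain ⟨f, h₀, -, hf, rfl⟩ := hP p hp
      exact LGraph.isPathUnion_pathGraph h₀ hf
    · rintro v ⟨hv, hl⟩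
      rw [hV] at hv
      obtain ⟨p, hp, hv⟩ := Set.mem_iUnion₂.1 hv
      obtain ⟨f, h₀, hn, hf, rfl⟩ := hP p hp
      obtain ⟨i, hi, rfl⟩ := hv
      rwa [← hl, level_apply_of_gridStep h₀ hf hi] at hn
  · rintro ⟨h, hT⟩
    have hpos : ∀ f, f 0 = (0, 0) → LGraph.pathGraph f (nseq k s) ≤ γ →
        IsPositivePath s k (LGraph.pathGraph f (nseq k s)) := fun f h₀ hle => by
      have hf : ∀ i < nseq k s, gridStep (f i) (f (i + 1)) := fun i hi =>
        h.gridStep_of_mem _ (hle.2 ⟨i, hi, rfl⟩)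
      have hn : f (nseq k s) ∈ γ.vertexLayer (nseq k s) :=
        ⟨hle.1 ⟨_, le_rfl, rfl⟩, level_apply_of_gridStep h₀ hf le_rfl⟩
      exact isPositivePath_iff.2 ⟨f, h₀, hT ▸ hn, hf, rfl⟩
    refine ⟨fun v hv => (hT.symm ▸ hv : v ∈ γ.vertexLayer _).1,
      {p | IsPositivePath s k p ∧ p ≤ γ}, fun p hp => hp.1, ?_, ?_⟩
    · refine Set.Subset.antisymm (fun v hv => ?_) (Set.iUnion₂_subset fun p hp => hp.2.1)
      obtain ⟨f, h₀, hle, hmem⟩ := h.exists_pathGraph_le_vertex_mem hv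
      exact Set.mem_iUnion₂.2 ⟨_, ⟨hpos f h₀ hle, hle⟩, hmem⟩
    · refine Set.Subset.antisymm (fun e he => ?_) (Set.iUnion₂_subset fun p hp => hp.2.2)
      obtain ⟨f, h₀, hle, hmem⟩ := h.exists_pathGraph_le_edge_mem he
      exact Set.mem_iUnion₂.2 ⟨_, ⟨hpos f h₀ hle, hle⟩, hmem⟩

/-- The horizontal edge into `v`; because of truncated subtraction it is a loop, not a grid step,
if `v` lies on the vertical axis. -/
def horizontalEdge (v : ℕ × ℕ) : (ℕ × ℕ) × (ℕ × ℕ) := ((v.1 - 1, v.2), v)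

/-- The vertical edge into `v`; because of truncated subtraction it is a loop, not a grid step,
if `v` lies on the horizontal axis. -/
def verticalEdge (v : ℕ × ℕ) : (ℕ × ℕ) × (ℕ × ℕ) := ((v.1, v.2 - 1), v)

theorem gridStep_horizontalEdge {v : ℕ × ℕ} : gridStep (horizontalEdge v).1 v ↔ 0 < v.1 := by
  obtain ⟨x, y⟩ := v
  simp only [gridStep, horizontalEdge, Prod.mk.injEq, and_true]
  omega

theorem gridStep_verticalEdge {v : ℕ × ℕ} : gridStep (verticalEdge v).1 v ↔ 0 < v.2 := by
  obtain ⟨x, y⟩ := v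
  simp only [gridStep, verticalEdge, Prod.mk.injEq, true_and]
  omega

theorem gridStep.eq_horizontalEdge_or_eq_verticalEdge {e : (ℕ × ℕ) × (ℕ × ℕ)}
    (h : gridStep e.1 e.2) : e = horizontalEdge e.2 ∨ e = verticalEdge e.2 := by
  obtain ⟨⟨x, y⟩, ⟨x', y'⟩⟩ := e
  simp only [gridStep, horizontalEdge, verticalEdge, Prod.mk.injEq, and_true] at h ⊢
  omega

theorem horizontalEdge_ne_verticalEdge {v w : ℕ × ℕ} (hv : v ≠ (0, 0)) :
    horizontalEdge v ≠ verticalEdge w := by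
  simp only [horizontalEdge, verticalEdge, ne_eq, Prod.ext_iff] at hv ⊢
  omega

section gw

variable {s : ℕ} {k α β : ℕ → ℕ}

theorem mem_gwE {e : (ℕ × ℕ) × (ℕ × ℕ)} :
    e ∈ gwE s k α β ↔ ∃ i ≤ s, (α i = 1 ∧ e = horizontalEdge (terminalVertex s k i)) ∨
      (β i = 1 ∧ e = verticalEdge (terminalVertex s k i)) :=
  Iff.rfl

theorem snd_mem_terminals_of_mem_gwE {e : (ℕ × ℕ) × (ℕ × ℕ)} (he : e ∈ gwE s k α β) :
    e.2 ∈ terminals s k := by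
  obtain ⟨i, hi, ⟨-, rfl⟩ | ⟨-, rfl⟩⟩ := mem_gwE.1 he <;> exact ⟨i, hi, rfl⟩

theorem terminalVertex_ne_zero (hs : 0 < s) (hk : ∀ i < s, 0 < k i) {i : ℕ} (hi : i ≤ s) :
    terminalVertex s k i ≠ (0, 0) := fun h => by
  have hn := nseq_pos hs hk
  rw [← level_terminalVertex k hi, level_eq_zero.2 h] at hn
  exact hn.false

theorem horizontalEdge_mem_gwE (hs : 0 < s) (hk : ∀ i < s, 0 < k i) {i : ℕ} (hi : i ≤ s) :
    horizontalEdge (terminalVertex s k i) ∈ gwE s k α β ↔ α i = 1 := by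
  refine ⟨fun h => ?_, fun h => ⟨i, hi, Or.inl ⟨h, rfl⟩⟩⟩
  obtain ⟨j, hj, ⟨hα, heq⟩ | ⟨-, heq⟩⟩ := mem_gwE.1 h
  · rwa [injOn_terminalVertex hk hi hj (congrArg Prod.snd heq)]
  · exact absurd heq (horizontalEdge_ne_verticalEdge (terminalVertex_ne_zero hs hk hi))

theorem verticalEdge_mem_gwE (hs : 0 < s) (hk : ∀ i < s, 0 < k i) {i : ℕ} (hi : i ≤ s) :
    verticalEdge (terminalVertex s k i) ∈ gwE s k α β ↔ β i = 1 := by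
  refine ⟨fun h => ?_, fun h => ⟨i, hi, Or.inr ⟨h, rfl⟩⟩⟩
  obtain ⟨j, hj, ⟨-, heq⟩ | ⟨hβ, heq⟩⟩ := mem_gwE.1 h
  · exact absurd heq.symm (horizontalEdge_ne_verticalEdge (terminalVertex_ne_zero hs hk hj))
  · rwa [injOn_terminalVertex hk hi hj (congrArg Prod.snd heq)]

theorem gwE_eq_iff (hs : 0 < s) (hk : ∀ i < s, 0 < k i) {G : Set ((ℕ × ℕ) × (ℕ × ℕ))}
    (hstep : ∀ e ∈ G, gridStep e.1 e.2) (hG : ∀ e ∈ G, e.2 ∈ terminals s k) :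
    gwE s k α β = G ↔ ∀ i ≤ s, (α i = 1 ↔ horizontalEdge (terminalVertex s k i) ∈ G) ∧
      (β i = 1 ↔ verticalEdge (terminalVertex s k i) ∈ G) := by
  constructor
  · rintro rfl i hi
    exact ⟨(horizontalEdge_mem_gwE hs hk hi).symm, (verticalEdge_mem_gwE hs hk hi).symm⟩
  · refine fun h => Set.Subset.antisymm ?_ fun e he => ?_
    · rintro e ⟨i, hi, ⟨hα, rfl⟩ | ⟨hβ, rfl⟩⟩
      exacts [(h i hi).1.1 hα, (h i hi).2.1 hβ]
    · obtain ⟨i, hi, hei⟩ := hG e he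
      change e.2 = terminalVertex s k i at hei
      refine ⟨i, hi, ?_⟩
      rcases (hstep e he).eq_horizontalEdge_or_eq_verticalEdge with heq | heq <;> rw [hei] at heq
      · exact Or.inl ⟨(h i hi).1.2 (heq ▸ he), heq⟩
      · exact Or.inr ⟨(h i hi).2.2 (heq ▸ he), heq⟩

end gw

section IsW

variable {s : ℕ} {k α β : ℕ → ℕ}

theorem IsW.pos (h : IsW s α β) : 0 < s := by
  obtain ⟨-, hα₀, -, hαs, -⟩ := h
  refine Nat.pos_of_ne_zero ?_
  rintro rfl
  omega

theorem IsW.cases (h : IsW s α β) {i : ℕ} (hi : i ≤ s) :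
    α i = 1 ∧ β i = 0 ∨ α i = 0 ∧ β i = 1 ∨ α i = 1 ∧ β i = 1 := by
  obtain ⟨hw, hα₀, hβ₀, hαs, hβs⟩ := h
  rcases i.eq_zero_or_pos with rfl | hpos
  · exact Or.inr (Or.inl ⟨hα₀, hβ₀⟩)
  rcases hi.eq_or_lt with rfl | hlt
  · exact Or.inl ⟨hαs, hβs⟩
  · simpa only [Prod.mk.injEq] using hw i hpos hlt

theorem IsW.pos_of_alpha_eq_one (h : IsW s α β) {i : ℕ} (hα : α i = 1) : 0 < i :=
  Nat.pos_of_ne_zero fun h₀ => by simp [h₀, h.2.1] at hα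

theorem IsW.lt_of_beta_eq_one (h : IsW s α β) {i : ℕ} (hi : i ≤ s) (hβ : β i = 1) : i < s :=
  lt_of_le_of_ne hi fun hs => by simp [hs, h.2.2.2.2] at hβ

theorem IsW.gridStep_of_mem_gwE (h : IsW s α β) (hk : ∀ i < s, 0 < k i)
    {e : (ℕ × ℕ) × (ℕ × ℕ)} (he : e ∈ gwE s k α β) : gridStep e.1 e.2 := by
  obtain ⟨i, hi, ⟨hα, rfl⟩ | ⟨hβ, rfl⟩⟩ := mem_gwE.1 he
  · exact gridStep_horizontalEdge.2 (nseq_pos (h.pos_of_alpha_eq_one hα) fun j hj =>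
      hk j (hj.trans_le hi))
  · exact gridStep_verticalEdge.2 (Nat.sub_pos_of_lt
      (strictMonoOn_nseq hk hi Set.self_mem_Iic (h.lt_of_beta_eq_one hi hβ)))

theorem IsW.snd_image_gwE (h : IsW s α β) : Prod.snd '' gwE s k α β = terminals s k := by
  refine Set.Subset.antisymm (Set.image_subset_iff.2 fun e => snd_mem_terminals_of_mem_gwE) ?_
  rintro _ ⟨i, hi, rfl⟩
  have hαβ : α i = 1 ∨ β i = 1 := by have := h.cases hi; omega
  rcases hαβ with hα | hβ
  · exact ⟨horizontalEdge (terminalVertex s k i), ⟨i, hi, Or.inl ⟨hα, rfl⟩⟩, rfl⟩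
  · exact ⟨verticalEdge (terminalVertex s k i), ⟨i, hi, Or.inr ⟨hβ, rfl⟩⟩, rfl⟩

theorem gwE_eq_union : gwE s k α β =
    (horizontalEdge ∘ terminalVertex s k) '' {i | i ≤ s ∧ α i = 1} ∪
      (verticalEdge ∘ terminalVertex s k) '' {i | i ≤ s ∧ β i = 1} := by
  ext e
  constructor
  · rintro ⟨i, hi, ⟨hα, rfl⟩ | ⟨hβ, rfl⟩⟩
    exacts [Or.inl ⟨i, ⟨hi, hα⟩, rfl⟩, Or.inr ⟨i, ⟨hi, hβ⟩, rfl⟩]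
  · rintro (⟨i, ⟨hi, hα⟩, rfl⟩ | ⟨i, ⟨hi, hβ⟩, rfl⟩)
    exacts [⟨i, hi, Or.inl ⟨hα, rfl⟩⟩, ⟨i, hi, Or.inr ⟨hβ, rfl⟩⟩]

theorem ncard_gwE_eq_add (hs : 0 < s) (hk : ∀ i < s, 0 < k i) :
    (gwE s k α β).ncard = {i | i ≤ s ∧ α i = 1}.ncard + {i | i ≤ s ∧ β i = 1}.ncard := by
  have hfin : ∀ p : ℕ → Prop, {i | i ≤ s ∧ p i}.Finite := fun p =>
    (Set.finite_Iic s).subset fun i hi => hi.1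
  have hinj : ∀ p : ℕ → Prop, Set.InjOn (terminalVertex s k) {i | i ≤ s ∧ p i} := fun p =>
    (injOn_terminalVertex hk).mono fun i hi => hi.1
  have hdisj : Disjoint ((horizontalEdge ∘ terminalVertex s k) '' {i | i ≤ s ∧ α i = 1})
      ((verticalEdge ∘ terminalVertex s k) '' {i | i ≤ s ∧ β i = 1}) := by
    rw [Set.disjoint_left]
    rintro _ ⟨i, hi, rfl⟩ ⟨j, -, heq⟩
    exact horizontalEdge_ne_verticalEdge (terminalVertex_ne_zero hs hk hi.1) heq.symm
  rw [gwE_eq_union, Set.ncard_union_eq hdisj ((hfin _).image _) ((hfin _).image _),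
    Set.InjOn.ncard_image fun i hi j hj h => hinj _ hi hj (congrArg Prod.snd h),
    Set.InjOn.ncard_image fun i hi j hj h => hinj _ hi hj (congrArg Prod.snd h)]

theorem ncard_setOf_le_and_eq_one (hα : ∀ i ≤ s, α i ≤ 1) :
    {i | i ≤ s ∧ α i = 1}.ncard = ∑ i ∈ Finset.range (s + 1), α i := by
  have hfilter : {i | i ≤ s ∧ α i = 1} = {i ∈ Finset.range (s + 1) | α i = 1} := by
    ext i
    simp
  rw [hfilter, Set.ncard_coe_finset, Finset.card_filter]
  refine Finset.sum_congr rfl fun i hi => ?_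
  have := hα i (Finset.mem_range_succ_iff.1 hi)
  split_ifs <;> omega

theorem IsW.sum_range_succ_mul (h : IsW s α β) :
    ∑ i ∈ Finset.range (s + 1), α i * β i =
      ∑ j ∈ Finset.range (s - 1), α (j + 1) * β (j + 1) := by
  obtain ⟨r, rfl⟩ : ∃ r, s = r + 1 := ⟨s - 1, by have := h.pos; omega⟩
  obtain ⟨-, hα₀, -, -, hβs⟩ := h
  rw [Finset.sum_range_succ, Finset.sum_range_succ', hα₀, hβs, zero_mul, mul_zero, add_zero,
    add_zero, Nat.add_sub_cancel]

theorem IsW.ncard_gwE (h : IsW s α β) (hk : ∀ i < s, 0 < k i) :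
    (gwE s k α β).ncard =
      (terminals s k).ncard + ∑ j ∈ Finset.range (s - 1), α (j + 1) * β (j + 1) := by
  have hadd : ∀ i ∈ Finset.range (s + 1), α i + β i = 1 + α i * β i := fun i hi => by
    rcases h.cases (Finset.mem_range_succ_iff.1 hi) with ⟨hα, hβ⟩ | ⟨hα, hβ⟩ | ⟨hα, hβ⟩ <;>
      rw [hα, hβ]
  rw [ncard_gwE_eq_add h.pos hk,
    ncard_setOf_le_and_eq_one fun i hi => by have := h.cases hi; omega,
    ncard_setOf_le_and_eq_one fun i hi => by have := h.cases hi; omega, ← Finset.sum_add_distrib,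
    Finset.sum_congr rfl hadd, Finset.sum_add_distrib, h.sum_range_succ_mul, ncard_terminals hk,
    Finset.sum_const, Finset.card_range, smul_eq_mul, mul_one]

theorem rstar_two_mul (s : ℕ) (k α β : ℕ → ℕ) (j : ℕ) :
    rstar s k α β (2 * j) = k j + 1 - α (j + 1) - β j := by
  rw [rstar, if_pos (by omega), Nat.mul_div_cancel_left j two_pos]

theorem rstar_two_mul_add_one (s : ℕ) (k α β : ℕ → ℕ) (j : ℕ) :
    rstar s k α β (2 * j + 1) = α (j + 1) * β (j + 1) := by
  rw [rstar, if_neg (by omega), show (2 * j + 1) / 2 = j by omega]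

theorem IsW.nseq_rstar_two_mul (h : IsW s α β) (hk : ∀ i < s, 0 < k i) {j : ℕ} (hj : j < s) :
    nseq (rstar s k α β) (2 * j) + 1 = nseq k j + β j := by
  induction j with
  | zero => simp [nseq_zero, h.2.2.1]
  | succ j ih =>
    have hkj := hk j (by omega)
    have hw := h.cases (i := j) (by omega)
    specialize ih (by omega)
    rw [Nat.mul_succ, nseq_succ, nseq_succ, nseq_succ, rstar_two_mul, rstar_two_mul_add_one]
    rcases h.cases hj.le with ⟨hα, hβ⟩ | ⟨hα, hβ⟩ | ⟨hα, hβ⟩ <;> rw [hα, hβ] <;> omega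

theorem IsW.nseq_rstar_two_mul_add_one (h : IsW s α β) (hk : ∀ i < s, 0 < k i) {j : ℕ}
    (hj : j < s) : nseq (rstar s k α β) (2 * j + 1) + α (j + 1) = nseq k (j + 1) := by
  have heven := h.nseq_rstar_two_mul hk hj
  have hkj := hk j hj
  have hw := h.cases hj.le
  have hw' := h.cases (i := j + 1) hj
  rw [nseq_succ, nseq_succ, rstar_two_mul]
  omega

theorem IsW.nseq_rstar_last (h : IsW s α β) (hk : ∀ i < s, 0 < k i) :
    nseq (rstar s k α β) (2 * s - 1) + 1 = nseq k s := by
  obtain ⟨r, rfl⟩ : ∃ r, s = r + 1 := ⟨s - 1, by have := h.pos; omega⟩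
  have hodd := h.nseq_rstar_two_mul_add_one hk r.lt_succ_self
  rwa [h.2.2.2.1] at hodd

theorem IsW.fst_horizontalEdge (h : IsW s α β) (hk : ∀ i < s, 0 < k i) {j : ℕ} (hj : j < s)
    (hα : α (j + 1) = 1) : (horizontalEdge (terminalVertex s k (j + 1))).1 =
      terminalVertex (2 * s - 1) (rstar s k α β) (2 * j + 1) := by
  have hodd := h.nseq_rstar_two_mul_add_one hk hj
  have hlast := h.nseq_rstar_last hk
  simp only [horizontalEdge, terminalVertex, Prod.mk.injEq]
  omega

theorem IsW.fst_verticalEdge (h : IsW s α β) (hk : ∀ i < s, 0 < k i) {j : ℕ} (hj : j < s)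
    (hβ : β j = 1) : (verticalEdge (terminalVertex s k j)).1 =
      terminalVertex (2 * s - 1) (rstar s k α β) (2 * j) := by
  have heven := h.nseq_rstar_two_mul hk hj
  have hlast := h.nseq_rstar_last hk
  simp only [verticalEdge, terminalVertex, Prod.mk.injEq]
  omega

theorem IsW.fst_mem_terminals_of_mem_gwE (h : IsW s α β) (hk : ∀ i < s, 0 < k i)
    {e : (ℕ × ℕ) × (ℕ × ℕ)} (he : e ∈ gwE s k α β) :
    e.1 ∈ terminals (2 * s - 1) (rstar s k α β) := by
  obtain ⟨i, hi, ⟨hα, rfl⟩ | ⟨hβ, rfl⟩⟩ := mem_gwE.1 he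
  · obtain ⟨j, rfl⟩ := Nat.exists_eq_add_of_le' (h.pos_of_alpha_eq_one hα)
    exact ⟨2 * j + 1, by omega, h.fst_horizontalEdge hk hi hα⟩
  · have his := h.lt_of_beta_eq_one hi hβ
    exact ⟨2 * i, by omega, h.fst_verticalEdge hk his hβ⟩

theorem IsW.fst_image_gwE (h : IsW s α β) (hk : ∀ i < s, 0 < k i) :
    Prod.fst '' gwE s k α β = terminals (2 * s - 1) (rstar s k α β) := by
  have hs := h.pos
  refine Set.Subset.antisymm
    (Set.image_subset_iff.2 fun e => h.fst_mem_terminals_of_mem_gwE hk) ?_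
  have hH : ∀ j < s, α (j + 1) = 1 →
      terminalVertex (2 * s - 1) (rstar s k α β) (2 * j + 1) ∈ Prod.fst '' gwE s k α β :=
    fun j hj hα => ⟨_, mem_gwE.2 ⟨j + 1, hj, Or.inl ⟨hα, rfl⟩⟩, h.fst_horizontalEdge hk hj hα⟩
  have hV : ∀ j < s, β j = 1 →
      terminalVertex (2 * s - 1) (rstar s k α β) (2 * j) ∈ Prod.fst '' gwE s k α β :=
    fun j hj hβ => ⟨_, mem_gwE.2 ⟨j, hj.le, Or.inr ⟨hβ, rfl⟩⟩, h.fst_verticalEdge hk hj hβ⟩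
  -- An entry `w̃_i = 0` makes two consecutive terminal vertices coincide, so that every terminal
  -- vertex is reached from one of the two indices.
  have hsucc : ∀ t, rstar s k α β t = 0 → terminalVertex (2 * s - 1) (rstar s k α β) (t + 1) =
      terminalVertex (2 * s - 1) (rstar s k α β) t := fun t ht => by
    rw [terminalVertex, terminalVertex, nseq_succ, ht, add_zero]
  rintro _ ⟨t, ht, rfl⟩
  change terminalVertex (2 * s - 1) (rstar s k α β) t ∈ _
  rcases t.even_or_odd' with ⟨j, rfl | rfl⟩
  · by_cases hβ : β j = 1
    · exact hV j (by omega) hβ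
    · have hα : α j = 1 ∧ β j = 0 := by have := h.cases (i := j) (by omega); omega
      obtain ⟨i, rfl⟩ := Nat.exists_eq_add_of_le' (h.pos_of_alpha_eq_one hα.1)
      rw [Nat.mul_succ, hsucc _ (by rw [rstar_two_mul_add_one, hα.2, mul_zero])]
      exact hH i (by omega) hα.1
  · by_cases hα : α (j + 1) = 1
    · exact hH j (by omega) hα
    · have hβ : α (j + 1) = 0 ∧ β (j + 1) = 1 := by
        have := h.cases (i := j + 1) (by omega); omega
      rw [← hsucc _ (by rw [rstar_two_mul_add_one, hβ.1, zero_mul])]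
      exact hV (j + 1) (h.lt_of_beta_eq_one (by omega) hβ.2) hβ.2

end IsW

section words

variable {s : ℕ}

theorem alph_succ (c : Fin (s - 1) → Fin 3) (i : Fin (s - 1)) : alph s c (i + 1) = aW3 (c i) := by
  rw [alph, if_neg (Nat.succ_ne_zero i)]
  exact dif_pos i.isLt

theorem bet_succ (c : Fin (s - 1) → Fin 3) (i : Fin (s - 1)) : bet s c (i + 1) = bW3 (c i) := by
  rw [bet, if_neg (Nat.succ_ne_zero i)]
  exact dif_pos i.isLt

theorem alph_last (hs : 1 ≤ s) (c : Fin (s - 1) → Fin 3) : alph s c s = 1 := by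
  rw [alph, if_neg (by omega), dif_neg (by omega)]

theorem bet_last (hs : 1 ≤ s) (c : Fin (s - 1) → Fin 3) : bet s c s = 0 := by
  rw [bet, if_neg (by omega), dif_neg (by omega)]

theorem existsUnique_letter {p q : Prop} (h : p ∨ q) :
    ∃! x : Fin 3, (aW3 x = 1 ↔ p) ∧ (bW3 x = 1 ↔ q) := by
  by_cases hp : p <;> by_cases hq : q
  · simp only [hp, hq]
    refine ⟨2, ?_, ?_⟩ <;> decide
  · simp only [hp, hq]
    refine ⟨0, ?_, ?_⟩ <;> decide
  · simp only [hp, hq]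
    refine ⟨1, ?_, ?_⟩ <;> decide
  · exact absurd h (not_or.2 ⟨hp, hq⟩)

theorem isW_alph_bet (hs : 1 ≤ s) (c : Fin (s - 1) → Fin 3) : IsW s (alph s c) (bet s c) := by
  refine ⟨fun i hi his => ?_, rfl, rfl, alph_last hs c, bet_last hs c⟩
  obtain ⟨i, rfl⟩ := Nat.exists_eq_add_of_le' hi
  let j : Fin (s - 1) := ⟨i, by omega⟩
  rw [alph_succ c j, bet_succ c j]
  generalize c j = x
  decide +revert

theorem existsUnique_word (hs : 1 ≤ s) {P Q : ℕ → Prop} (h : ∀ i ≤ s, P i ∨ Q i) (h₀ : ¬P 0)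
    (hₛ : ¬Q s) : ∃! c : Fin (s - 1) → Fin 3,
      ∀ i ≤ s, (alph s c i = 1 ↔ P i) ∧ (bet s c i = 1 ↔ Q i) := by
  choose c hc hunique using fun i : Fin (s - 1) =>
    existsUnique_letter (h (i + 1) (Nat.add_lt_of_lt_sub i.isLt).le)
  refine ⟨c, fun i hi => ?_, fun c' hc' => funext fun i => hunique i _ ?_⟩
  · rcases i.eq_zero_or_pos with rfl | hpos
    · exact ⟨by simp [alph, h₀], by simp [bet, (h 0 hi).resolve_left h₀]⟩
    rcases hi.eq_or_lt with rfl | hlt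
    · simp [alph_last hs, bet_last hs, hₛ, (h i hi).resolve_right hₛ]
    · obtain ⟨j, rfl⟩ := Nat.exists_eq_add_of_le' hpos
      simpa only [← alph_succ, ← bet_succ] using hc ⟨j, by omega⟩
  · simpa only [← alph_succ, ← bet_succ] using hc' (i + 1) (by omega)

theorem existsUnique_gwE_eq (hs : 1 ≤ s) {k : ℕ → ℕ} (hk : ∀ i < s, 0 < k i)
    {G : Set ((ℕ × ℕ) × (ℕ × ℕ))} (hstep : ∀ e ∈ G, gridStep e.1 e.2)
    (hG : Prod.snd '' G = terminals s k) :
    ∃! c : Fin (s - 1) → Fin 3, gwE s k (alph s c) (bet s c) = G := by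
  simp only [gwE_eq_iff hs hk hstep fun e he => hG ▸ ⟨e, he, rfl⟩]
  refine existsUnique_word hs (fun i hi => ?_) (fun h => ?_) fun h => ?_
  · obtain ⟨e, he, hei⟩ : terminalVertex s k i ∈ Prod.snd '' G := hG ▸ ⟨i, hi, rfl⟩
    exact (hstep e he).eq_horizontalEdge_or_eq_verticalEdge.imp (fun h => by rwa [← hei, ← h])
      fun h => by rwa [← hei, ← h]
  · exact (gridStep_horizontalEdge.1 (hstep _ h)).ne' (nseq_zero k)
  · exact (gridStep_verticalEdge.1 (hstep _ h)).ne' (Nat.sub_self _)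

end words

theorem finite_setOf_isLadderFace (s : ℕ) (k : ℕ → ℕ) : {γ | IsLadderFace s k γ}.Finite :=
  (LGraph.finite_setOf_isPathUnion _).subset fun _ hγ => (isLadderFace_iff.1 hγ).1

theorem IsW.ncard_setOf_edgeLayer_eq_gwE {s : ℕ} {k α β : ℕ → ℕ} (h : IsW s α β)
    (hk : ∀ i < s, 0 < k i) (d : ℤ) :
    {γ | IsLadderFace s k γ ∧ γ.edgeLayer (nseq k s) = gwE s k α β ∧ ldim γ = d}.ncard =
      {γ | IsLadderFace (2 * s - 1) (rstar s k α β) γ ∧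
        ldim γ = d - ∑ j ∈ Finset.range (s - 1), α (j + 1) * β (j + 1)}.ncard := by
  have hlast := h.nseq_rstar_last hk
  have hlevel : ∀ e ∈ gwE s k α β, level e.2 = nseq (rstar s k α β) (2 * s - 1) + 1 :=
    fun e he => by rw [hlast, level_of_mem_terminals (snd_mem_terminals_of_mem_gwE he)]
  have hfibre := LGraph.ncard_setOf_edgeLayer_eq (fun e => h.gridStep_of_mem_gwE hk) hlevel d
  rw [h.snd_image_gwE, h.ncard_gwE hk, h.fst_image_gwE hk, Nat.cast_add, add_sub_cancel_left]
    at hfibre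
  simp only [isLadderFace_iff, and_assoc, hfibre.symm, ← hlast]
  congr 1
  ext γ
  refine and_congr_right fun hγ => and_iff_right_of_imp fun hG => ?_
  rw [← hγ.snd_image_edgeLayer (Nat.succ_ne_zero _), hG.1, h.snd_image_gwE]

theorem ncard_setOf_isLadderFace_ldim_eq {s : ℕ} (hs : 1 ≤ s) {k : ℕ → ℕ}
    (hk : ∀ i < s, 0 < k i) (d : ℤ) :
    {γ | IsLadderFace s k γ ∧ ldim γ = d}.ncard =
      ∑ c : Fin (s - 1) → Fin 3,
        {γ | IsLadderFace (2 * s - 1) (newk s c k) γ ∧ ldim γ = d - wsize s c}.ncard := by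
  let fibre (c : Fin (s - 1) → Fin 3) : Set LGraph := {γ | IsLadderFace s k γ ∧
    γ.edgeLayer (nseq k s) = gwE s k (alph s c) (bet s c) ∧ ldim γ = d}
  have hword : ∀ γ, IsLadderFace s k γ → ∃! c : Fin (s - 1) → Fin 3,
      gwE s k (alph s c) (bet s c) = γ.edgeLayer (nseq k s) := fun γ hγ => by
    obtain ⟨hunion, hT⟩ := isLadderFace_iff.1 hγ
    refine existsUnique_gwE_eq hs hk (fun e he => hunion.gridStep_of_mem e he.1) ?_
    rw [hunion.snd_image_edgeLayer (nseq_pos hs hk).ne', hT]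
  have hcover : {γ | IsLadderFace s k γ ∧ ldim γ = d} = ⋃ c, fibre c := by
    ext γ
    simp only [fibre, Set.mem_iUnion, Set.mem_ofPred_eq, exists_and_left, exists_and_right]
    exact and_congr_right fun hγ => (and_iff_right ((hword γ hγ).exists.imp fun c => Eq.symm)).symm
  have hdisj : Pairwise (Function.onFun Disjoint fibre) := fun c c' hne =>
    Set.disjoint_left.2 fun γ hγ hγ' => hne ((hword γ hγ.1).unique hγ.2.1.symm hγ'.2.1.symm)
  have hfinite : ∀ c, (fibre c).Finite := fun c =>
    (finite_setOf_isLadderFace s k).subset fun γ hγ => hγ.1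
  rw [hcover, Set.ncard_iUnion_of_finite hfinite hdisj, finsum_eq_sum_of_fintype]
  -- `newk s c k` unfolds to `rstar s k (alph s c) (bet s c)`.
  exact Finset.sum_congr rfl fun c _ => (isW_alph_bet hs c).ncard_setOf_edgeLayer_eq_gwE hk d

theorem coeff_X_pow_mul_fpol (w s : ℕ) (k : ℕ → ℕ) (d : ℕ) :
    PowerSeries.coeff d ((PowerSeries.X : PowerSeries ℤ) ^ w * fpol s k) =
      ({γ | IsLadderFace s k γ ∧ ldim γ = (d : ℤ) - w}.ncard : ℤ) := by
  rw [PowerSeries.coeff_X_pow_mul']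
  split_ifs with hwd
  · rw [fpol, PowerSeries.coeff_mk, Nat.cast_sub hwd]
  · have hempty : {γ | IsLadderFace s k γ ∧ ldim γ = (d : ℤ) - w} = ∅ :=
      Set.eq_empty_of_forall_notMem fun γ hγ => by
        have := (isLadderFace_iff.1 hγ.1).1.ldim_nonneg
        have := hγ.2
        omega
    rw [hempty, Set.ncard_empty, Nat.cast_zero]

/-- Lemma 3.7. For `k ∈ ℤ^s_{≥1}`, the `f`-polynomial of the
ladder diagram `Γ_k` satisfies the recursion
`F_k(t) = Σ_{w ∈ W_{s-1}} t^{|w|} F_{r_w(k) * w̃}(t)`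
(stated as an identity of the generating functions `Σ_d #{faces of dim d} t^d`;
elements `w ∈ W_{s-1}` are encoded by `c : Fin (s-1) → Fin 3`). -/
theorem fpol_recursion (s : ℕ) (hs : 1 ≤ s) (k : ℕ → ℕ) (hk : ∀ i < s, 0 < k i) :
    fpol s k = ∑ c : Fin (s - 1) → Fin 3,
      (PowerSeries.X : PowerSeries ℤ) ^ wsize s c * fpol (2 * s - 1) (newk s c k) := by
  ext d
  simp only [map_sum, coeff_X_pow_mul_fpol]
  rw [fpol, PowerSeries.coeff_mk, ncard_setOf_isLadderFace_ldim_eq hs hk, Nat.cast_sum]
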